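/- Let ℋ be a complex Hilbert space, A ∈ B(ℋ), and k ≥ 2 with k ≤ dim ℋ. Then Ω_k(A) = ⋂{Ω_1(A + 2e^{iξ}‖A‖P) : ξ ∈ [0,2π), P ∈ P_{k−1}}, i.e., Ω_k(A) is the intersection of the sets Ω_1(A + 2e^{iξ}‖A‖P) over all ξ ∈ [0,2π) and all rank-(k−1) orthogonal projections P on ℋ. -/

import Mathlib

noncomputable section

open scoped InnerProductSpace
open Complex

variable {H : Type*} [NormedAddCommGroup H] [InnerProductSpace ℂ H] [CompleteSpace H]

/-- `P` is an orthogonal projection: self-adjoint and idempotent. -/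
def IsOrthProj (P : H →L[ℂ] H) : Prop :=
  IsSelfAdjoint P ∧ P ∘L P = P

/-- The rank of a bounded operator, as a cardinal. -/
def opRank (F : H →L[ℂ] H) : Cardinal :=
  Module.rank ℂ (LinearMap.range (F : H →ₗ[ℂ] H))

/-- The rank-`k` numerical range `Λ_k(A)`. -/
def rankKRange (k : ℕ) (A : H →L[ℂ] H) : Set ℂ :=
  { lam | ∃ P : H →L[ℂ] H, IsOrthProj P ∧ opRank P = k ∧ P ∘L A ∘L P = lam • P }

/-- The classical numerical range `W(A)`. -/
def numRange (A : H →L[ℂ] H) : Set ℂ :=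
  { z | ∃ x : H, ‖x‖ = 1 ∧ ⟪x, A x⟫_ℂ = z }

/-- `λ_k(T)`: the supremum over `k`-dimensional compressions of the `k`-th largest
eigenvalue of the compression (Courant–Fischer form: sup over `k`-dimensional
subspaces of the infimum of the Rayleigh quotient). -/
def lambdaSA (k : ℕ) (T : H →L[ℂ] H) : ℝ :=
  sSup { t : ℝ | ∃ V : Submodule ℂ H, Module.finrank ℂ V = k ∧
    ∀ x ∈ V, ‖x‖ = 1 → t ≤ (⟪x, T x⟫_ℂ).re }

/-- The real part `(T + T*)/2` of an operator. -/
def reOp (T : H →L[ℂ] H) : H →L[ℂ] H :=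
  (2 : ℂ)⁻¹ • (T + ContinuousLinearMap.adjoint T)

/-- The set `Ω_k(A)`. -/
def omegaK (k : ℕ) (A : H →L[ℂ] H) : Set ℂ :=
  { μ | ∀ ξ ∈ Set.Ico (0 : ℝ) (2 * Real.pi),
      (Complex.exp (ξ * Complex.I) * μ).re ≤ lambdaSA k (reOp (Complex.exp (ξ * Complex.I) • A)) }


lemma exists_sub_finrank {E : Type*} [AddCommGroup E] [Module ℂ E] (n : ℕ)
    (h : (n : Cardinal) ≤ Module.rank ℂ E) :
    ∃ V : Submodule ℂ E, Module.finrank ℂ V = n ∧ Module.Finite ℂ V := by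
  obtain ⟨f, hf⟩ := Module.le_rank_iff_exists_linearMap.1 h
  refine ⟨LinearMap.range f, ?_, inferInstance⟩
  rw [LinearMap.finrank_range_of_inj hf]; simp

lemma exists_ext_finrank {E : Type*} [AddCommGroup E] [Module ℂ E] (M : Submodule ℂ E)
    [Module.Finite ℂ M] (d : ℕ)
    (h : ((Module.finrank ℂ M + d : ℕ) : Cardinal) ≤ Module.rank ℂ E) :
    ∃ V : Submodule ℂ E, M ≤ V ∧ Module.finrank ℂ V = Module.finrank ℂ M + d ∧
      Module.Finite ℂ V := by
  induction d with
  | zero => exact ⟨M, le_rfl, rfl, inferInstance⟩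
  | succ d ih =>
    obtain ⟨V, hMV, hV, hfin⟩ := ih (le_trans (by exact_mod_cast (by omega)) h)
    have hne : V ≠ ⊤ := by
      rintro rfl
      have h1 : Module.rank ℂ E = ((Module.finrank ℂ M + d : ℕ) : Cardinal) := by
        rw [← hV, Module.finrank_eq_rank, rank_top]
      rw [h1] at h
      have : Module.finrank ℂ M + (d + 1) ≤ Module.finrank ℂ M + d := by exact_mod_cast h
      omega
    obtain ⟨x, -, hx⟩ := SetLike.exists_of_lt (lt_top_iff_ne_top.2 hne)
    refine ⟨V ⊔ Submodule.span ℂ {x}, hMV.trans le_sup_left, ?_, inferInstance⟩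
    have hx0 : x ≠ 0 := by rintro rfl; exact hx V.zero_mem
    have h1 := Submodule.finrank_add_le_finrank_add_finrank V (Submodule.span ℂ {x})
    rw [finrank_span_singleton hx0] at h1
    have h2 : V < V ⊔ Submodule.span ℂ {x} := by
      refine lt_of_le_of_ne le_sup_left fun he => hx ?_
      rw [he]; exact Submodule.mem_sup_right (Submodule.mem_span_singleton_self x)
    have h3 := Submodule.finrank_lt_finrank_of_lt h2
    omega

lemma abs_re_inner_le (T : H →L[ℂ] H) (x : H) (hx : ‖x‖ = 1) :
    |(⟪x, T x⟫_ℂ).re| ≤ ‖T‖ := by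
  refine (Complex.abs_re_le_norm _).trans ((norm_inner_le_norm _ _).trans ?_)
  have := T.le_opNorm x
  rw [hx] at *; linarith

lemma lam_bdd (k : ℕ) (hk : 1 ≤ k) (T : H →L[ℂ] H) :
    BddAbove { t : ℝ | ∃ V : Submodule ℂ H, Module.finrank ℂ V = k ∧
    ∀ x ∈ V, ‖x‖ = 1 → t ≤ (⟪x, T x⟫_ℂ).re } := by
  refine ⟨‖T‖, ?_⟩
  rintro t ⟨V, hV, h⟩
  have : 0 < Module.finrank ℂ V := by omega
  have := Module.nontrivial_of_finrank_pos this
  obtain ⟨x, hx⟩ := exists_norm_eq V zero_le_one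
  have h1 : ‖(x : H)‖ = 1 := by simpa using hx
  exact (h x x.2 h1).trans ((le_abs_self _).trans (abs_re_inner_le T x h1))

lemma lam_mem (k : ℕ) (hk : (k : Cardinal) ≤ Module.rank ℂ H) (T : H →L[ℂ] H) :
    -‖T‖ ∈ { t : ℝ | ∃ V : Submodule ℂ H, Module.finrank ℂ V = k ∧
    ∀ x ∈ V, ‖x‖ = 1 → t ≤ (⟪x, T x⟫_ℂ).re } := by
  obtain ⟨V, hV, -⟩ := exists_sub_finrank k hk
  exact ⟨V, hV, fun x _ hx => (abs_le.1 (abs_re_inner_le T x hx)).1⟩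

lemma le_lam_one (T : H →L[ℂ] H) (x : H) (hx : ‖x‖ = 1) :
    (⟪x, T x⟫_ℂ).re ≤ lambdaSA 1 T := by
  refine le_csSup (lam_bdd 1 le_rfl T) ⟨Submodule.span ℂ {x}, ?_, ?_⟩
  · refine finrank_span_singleton ?_
    rintro rfl; simp at hx
  · intro y hy hy1
    obtain ⟨c, rfl⟩ := Submodule.mem_span_singleton.1 hy
    rw [norm_smul, hx, mul_one] at hy1
    rw [map_smul, inner_smul_left, inner_smul_right, ← mul_assoc, mul_comm _ c,
      Complex.mul_conj, Complex.normSq_eq_norm_sq, hy1]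
    simp

lemma lam_one_le (hk : (1 : Cardinal) ≤ Module.rank ℂ H) (T : H →L[ℂ] H) (s : ℝ)
    (h : ∀ x, ‖x‖ = 1 → (⟪x, T x⟫_ℂ).re ≤ s) : lambdaSA 1 T ≤ s := by
  refine csSup_le ⟨_, lam_mem 1 (by simpa using hk) T⟩ ?_
  rintro t ⟨V, hV, ht⟩
  have := Module.nontrivial_of_finrank_pos (R := ℂ) (M := V) (by omega)
  obtain ⟨x, hx⟩ := exists_norm_eq V zero_le_one
  have h1 : ‖(x : H)‖ = 1 := by simpa using hx
  exact (ht x x.2 h1).trans (h x h1)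

lemma re_inner_reOp (T : H →L[ℂ] H) (x : H) :
    (⟪x, reOp T x⟫_ℂ).re = (⟪x, T x⟫_ℂ).re := by
  have : (⟪x, ContinuousLinearMap.adjoint T x⟫_ℂ).re = (⟪x, T x⟫_ℂ).re := by
    rw [ContinuousLinearMap.adjoint_inner_right, ← inner_conj_symm, Complex.conj_re]
  have h2 : (2 : ℂ)⁻¹ = ((2⁻¹ : ℝ) : ℂ) := by push_cast; rfl
  simp only [reOp, ContinuousLinearMap.smul_apply, ContinuousLinearMap.add_apply,
    inner_smul_right, inner_add_right, h2, Complex.re_ofReal_mul, Complex.add_re, this]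
  ring

lemma reOp_sa (T : H →L[ℂ] H) : IsSelfAdjoint (reOp T) := by
  rw [IsSelfAdjoint, reOp, star_smul, star_add, ContinuousLinearMap.star_eq_adjoint,
    ContinuousLinearMap.star_eq_adjoint, ContinuousLinearMap.adjoint_adjoint, add_comm]
  simp

lemma reOp_norm (T : H →L[ℂ] H) : ‖reOp T‖ ≤ ‖T‖ := by
  rw [reOp, norm_smul]
  have h1 := norm_add_le T (ContinuousLinearMap.adjoint T)
  have h2 : ‖ContinuousLinearMap.adjoint T‖ = ‖T‖ := LinearIsometryEquiv.norm_map _ _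
  rw [h2] at h1
  simp only [norm_inv, Complex.norm_ofNat]
  linarith

/-- Easy direction. -/
lemma lam_le_perturb (k : ℕ) (hk1 : 1 ≤ k) (hk : (k : Cardinal) ≤ Module.rank ℂ H)
    (T S P : H →L[ℂ] H) (hP : opRank P = ((k - 1 : ℕ) : Cardinal))
    (hTS : ∀ x, P x = 0 → (⟪x, T x⟫_ℂ).re = (⟪x, S x⟫_ℂ).re) :
    lambdaSA k T ≤ lambdaSA 1 S := by
  refine csSup_le ⟨_, lam_mem k hk T⟩ ?_
  rintro t ⟨V, hV, ht⟩
  have hVf : Module.Finite ℂ V := Module.finite_of_finrank_pos (by omega)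
  have hRf : Module.Finite ℂ (LinearMap.range (P : H →ₗ[ℂ] H)) := by
    apply Module.rank_lt_aleph0_iff.1
    unfold opRank at hP
    rw [hP]; exact Cardinal.natCast_lt_aleph0
  have hRr : Module.finrank ℂ (LinearMap.range (P : H →ₗ[ℂ] H)) = k - 1 :=
    Module.finrank_eq_of_rank_eq hP
  have hker := LinearMap.ker_ne_bot_of_finrank_lt
    (f := (P : H →ₗ[ℂ] H).rangeRestrict ∘ₗ V.subtype) (by omega)
  obtain ⟨v, hv, hv0⟩ := Submodule.exists_mem_ne_zero_of_ne_bot hker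
  have hPv : P (v : H) = 0 := by
    have := congrArg Subtype.val (LinearMap.mem_ker.1 hv)
    simpa using this
  have hv0' : (v : H) ≠ 0 := by simpa using hv0
  have hn : ‖((‖(v : H)‖⁻¹ : ℝ) : ℂ) • (v : H)‖ = 1 := by
    rw [norm_smul, Complex.norm_real, norm_inv, norm_norm, inv_mul_cancel₀ (norm_ne_zero_iff.2 hv0')]
  have h1 := ht _ (V.smul_mem ((‖(v : H)‖⁻¹ : ℝ) : ℂ) v.2) hn
  rw [hTS _ (by rw [map_smul, hPv, smul_zero])] at h1
  exact h1.trans (le_lam_one S _ hn)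

/-- Hard direction. -/
lemma exists_proj (k : ℕ) (hk1 : 1 ≤ k) (hk : (k : Cardinal) ≤ Module.rank ℂ H)
    (T : H →L[ℂ] H) (hT : IsSelfAdjoint T) (a t : ℝ) (ha : ‖T‖ ≤ a) (ht : lambdaSA k T < t) :
    ∃ P : H →L[ℂ] H, IsOrthProj P ∧ opRank P = ((k - 1 : ℕ) : Cardinal) ∧
      ∀ x, ‖x‖ = 1 → (⟪x, T x⟫_ℂ).re - 2 * a * (⟪x, P x⟫_ℂ).re ≤ t := by
  have hta : -a ≤ t := by
    have := le_csSup (lam_bdd k hk1 T) (lam_mem k hk T)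
    unfold lambdaSA at ht
    linarith
  set B : H →L[ℂ] H := cfc (fun x : ℝ => max (x - t) 0) T with hB
  have hc : Continuous (fun x : ℝ => max (x - t) 0) := by fun_prop
  have hTt : cfc (fun x : ℝ => x - t) T = T - algebraMap ℝ _ t := by
    rw [cfc_sub .., cfc_id' .., cfc_const ..]
  have hBsa : IsSelfAdjoint B := cfc_predicate _ _
  have hal : ∀ (r : ℝ) (x : H), (⟪x, (algebraMap ℝ (H →L[ℂ] H) r) x⟫_ℂ).re = r * ‖x‖ ^ 2 := by
    intro r x
    have : (algebraMap ℝ (H →L[ℂ] H) r) x = (r : ℂ) • x := by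
      rw [Algebra.algebraMap_eq_smul_one]; simp
    rw [this, inner_smul_right, inner_self_eq_norm_sq_to_K, Complex.re_ofReal_mul]
    norm_cast
  have mono : ∀ {X Y : H →L[ℂ] H}, X ≤ Y → ∀ x, (⟪x, X x⟫_ℂ).re ≤ (⟪x, Y x⟫_ℂ).re := by
    intro X Y h x
    have := ((ContinuousLinearMap.le_def X Y).1 h).re_inner_nonneg_right x
    simp only [ContinuousLinearMap.sub_apply, inner_sub_right, map_sub] at this
    simpa using this
  have h1 : T - algebraMap ℝ _ t ≤ B := by
    rw [← hTt]; exact cfc_mono (fun x _ => le_max_left _ _)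
  have h2 : B ≤ algebraMap ℝ _ (2 * a) := by
    refine cfc_le_algebraMap _ _ _ fun x hx => ?_
    have h0 := norm_nonneg T
    have hx1 : ‖x‖ ≤ ‖T‖ * ‖(1 : H →L[ℂ] H)‖ := spectrum.norm_le_norm_mul_of_mem hx
    have hx2 : ‖T‖ * ‖(1 : H →L[ℂ] H)‖ ≤ ‖T‖ * 1 :=
      mul_le_mul_of_nonneg_left ContinuousLinearMap.norm_id_le h0
    have hx3 := (le_abs_self x)
    rw [Real.norm_eq_abs] at hx1
    exact max_le (by linarith) (by linarith)
  have h3 : 0 ≤ B * (T - algebraMap ℝ _ t) * B := by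
    rw [← hTt, hB, ← cfc_mul .., ← cfc_mul ..]
    refine cfc_nonneg fun x _ => ?_
    rcases le_total (x - t) 0 with h | h
    · simp [max_eq_right h]
    · rw [max_eq_left h]; positivity
  have hBs : ∀ x y, ⟪B x, y⟫_ℂ = ⟪x, B y⟫_ℂ := by
    intro x y
    rw [← ContinuousLinearMap.adjoint_inner_right, ← ContinuousLinearMap.star_eq_adjoint,
      hBsa.star_eq]
  set M := LinearMap.range (B : H →ₗ[ℂ] H) with hM
  have hMk : Module.rank ℂ M < k := by
    by_contra hcon
    push Not at hcon
    obtain ⟨V, hV, -⟩ := exists_sub_finrank k hcon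
    refine absurd (le_csSup (lam_bdd k hk1 T) (a := t) ⟨V.map M.subtype, ?_, ?_⟩) (not_le.2 ht)
    · rw [← hV]
      exact Submodule.finrank_map_subtype_eq M V
    · intro x hx hx1
      obtain ⟨⟨y, ⟨z, rfl⟩⟩, -, rfl⟩ := hx
      have h4 := mono h3 z
      have h4' : (0 : ℝ) ≤ (⟪z, B ((T - algebraMap ℝ (H →L[ℂ] H) t) (B z))⟫_ℂ).re := by
        simpa using h4
      clear h4
      rename' h4' => h4
      rw [ContinuousLinearMap.sub_apply] at h4
      rw [← hBs, inner_sub_right, Complex.sub_re, hal] at h4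
      simp only [Submodule.subtype_apply, ContinuousLinearMap.coe_coe] at hx1 ⊢
      rw [hx1] at h4
      simp at h4
      linarith
  have hMf : Module.Finite ℂ M :=
    Module.rank_lt_aleph0_iff.1 (hMk.trans Cardinal.natCast_lt_aleph0)
  have hMr : Module.finrank ℂ M < k := by
    rw [← Module.finrank_eq_rank] at hMk
    exact_mod_cast hMk
  obtain ⟨W, hMW, hW, hWf⟩ := exists_ext_finrank M (k - 1 - Module.finrank ℂ M)
    (le_trans (by exact_mod_cast (by omega)) hk)
  refine ⟨W.starProjection, ⟨isSelfAdjoint_starProjection W, W.isIdempotentElem_starProjection⟩,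
    ?_, ?_⟩
  · have : LinearMap.range (W.starProjection : H →ₗ[ℂ] H) = W := W.range_starProjection
    rw [opRank, this, ← Module.finrank_eq_rank, hW]
    congr 1; omega
  · intro x hx
    have hEs : ∀ x y, ⟪W.starProjection x, y⟫_ℂ = ⟪x, W.starProjection y⟫_ℂ := fun x y =>
      W.starProjection_isSymmetric x y
    have hEB : ∀ y, W.starProjection (B y) = B y := fun y =>
      Submodule.starProjection_eq_self_iff.2 (hMW ⟨y, rfl⟩)
    have h5 : ⟪x, B x⟫_ℂ = ⟪W.starProjection x, B (W.starProjection x)⟫_ℂ := by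
      rw [hEs, hEB, ← hBs x (W.starProjection x), ← hEs, hEB, hBs]
    have h6 : ⟪x, W.starProjection x⟫_ℂ = ⟪W.starProjection x, W.starProjection x⟫_ℂ := by
      rw [hEs, Submodule.starProjection_eq_self_iff.2 (W.starProjection_apply_mem x)]
    have h7 := mono h2 (W.starProjection x)
    have h8 := mono h1 x
    rw [hal, ← h5] at h7
    rw [ContinuousLinearMap.sub_apply, inner_sub_right, Complex.sub_re, hal, hx] at h8
    have h9 : (⟪x, W.starProjection x⟫_ℂ).re = ‖W.starProjection x‖ ^ 2 := by
      rw [h6, inner_self_eq_norm_sq_to_K]; norm_cast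
    rw [h9]
    linarith

/-- For `2 ≤ k ≤ dim ℋ`, `Ω_k(A)` is the intersection of the sets
`Ω_1(A + 2e^{iξ}‖A‖P)` over all `ξ ∈ [0,2π)` and all rank-`(k-1)` orthogonal
projections `P`. -/
theorem omegaK_eq_iInter_rank_k_sub_one
    (k : ℕ) (hk2 : 2 ≤ k) (hk : (k : Cardinal) ≤ Module.rank ℂ H)
    (A : H →L[ℂ] H) :
    omegaK k A =
      ⋂ ξ ∈ Set.Ico (0 : ℝ) (2 * Real.pi),
        ⋂ P ∈ {P : H →L[ℂ] H | IsOrthProj P ∧ opRank P = ((k - 1 : ℕ) : Cardinal)},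
          omegaK 1 (A + (2 * Complex.exp (ξ * Complex.I) * (‖A‖ : ℂ)) • P) := by
  ext μ
  simp only [Set.mem_iInter, Set.mem_setOf_eq]
  constructor
  · intro h ξ _ P hP θ hθ
    refine (h θ hθ).trans (lam_le_perturb k (by omega) hk _ _ P hP.2 ?_)
    intro x hx
    simp [re_inner_reOp, hx]
  · intro h θ hθ
    obtain ⟨ξ, hξ, he⟩ : ∃ ξ ∈ Set.Ico (0 : ℝ) (2 * Real.pi),
        Complex.exp (θ * Complex.I) * Complex.exp (ξ * Complex.I) = -1 := by
      obtain ⟨h0, h1⟩ := hθ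
      have hpi := Real.pi_pos
      rcases le_or_gt θ Real.pi with h2 | h2
      · refine ⟨Real.pi - θ, ⟨by linarith, by linarith⟩, ?_⟩
        rw [← Complex.exp_add, ← Complex.exp_pi_mul_I]
        congr 1; push_cast; ring
      · refine ⟨Real.pi - θ + 2 * Real.pi, ⟨by linarith, by linarith⟩, ?_⟩
        rw [← Complex.exp_add, ← Complex.exp_pi_mul_I, ← Complex.exp_periodic (Real.pi * Complex.I)]
        congr 1; push_cast; ring
    refine le_of_forall_gt_imp_ge_of_dense fun t ht => ?_
    have hn : ‖reOp (Complex.exp (θ * Complex.I) • A)‖ ≤ ‖A‖ := by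
      refine (reOp_norm _).trans ?_
      rw [norm_smul, Complex.norm_exp_ofReal_mul_I, one_mul]
    obtain ⟨P, hP, hr, hPt⟩ := exists_proj k (by omega) hk _ (reOp_sa _) ‖A‖ t hn ht
    refine (h ξ hξ P ⟨hP, hr⟩ θ hθ).trans (lam_one_le ?_ _ _ ?_)
    · refine le_trans ?_ hk
      exact_mod_cast (by omega : 1 ≤ k)
    · intro x hx
      have h1 := hPt x hx
      rw [re_inner_reOp] at h1 ⊢
      have h2 : Complex.exp (θ * Complex.I) • (A + (2 * Complex.exp (ξ * Complex.I) * (‖A‖ : ℂ)) • P)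
          = Complex.exp (θ * Complex.I) • A + ((-(2 * ‖A‖) : ℝ) : ℂ) • P := by
        rw [smul_add, smul_smul]
        congr 2
        calc _ = (Complex.exp (θ * Complex.I) * Complex.exp (ξ * Complex.I)) * (2 * ‖A‖) := by ring
          _ = _ := by rw [he]; push_cast; ring
      rw [h2, ContinuousLinearMap.add_apply, inner_add_right, Complex.add_re,
        show (((-(2 * ‖A‖) : ℝ) : ℂ) • P) x = ((-(2 * ‖A‖) : ℝ) : ℂ) • P x from rfl,
        inner_smul_right x (P x), Complex.re_ofReal_mul]
      linarith
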